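/- In the hypersurface setting of the context, for every field extension K of k and every arc φ : S[x] → K[[t]] in X = V(f) through the closed point ξ (with φ(x) and all φ(z_j) nonzero), one has r_{X,φ}/ord(φ) ≥ ord(G_X^{(d)}). -/

import Mathlib

open Polynomial
open scoped ENNReal

noncomputable section

namespace NashMult

/-- The `m`-adic order `ν(f)` of an element `f` of a ring: the largest `n` with `f ∈ m ^ n`. -/
def adicOrder {R : Type*} [CommRing R] (m : Ideal R) (f : R) : ℕ :=
  sSup {n : ℕ | f ∈ m ^ n}

/-- A subalgebra `G ⊆ R[W]` is *graded* if it is spanned by its "monomials", i.e. it is closed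
under taking homogeneous components.  This is the condition expressing that `G = ⊕ I_l W^l`
for a family of ideals `I_l` (with `I_0 = R` and `I_i · I_j ⊆ I_{i+j}` automatic). -/
def Graded {R : Type*} [CommRing R] (G : Subalgebra R (Polynomial R)) : Prop :=
  ∀ p ∈ G, ∀ n : ℕ, (C (p.coeff n) * X ^ n : Polynomial R) ∈ G

/-- A *Rees algebra* over `R`: a finitely generated graded subalgebra of `R[W]`. -/
def IsReesAlgebra {R : Type*} [CommRing R] (G : Subalgebra R (Polynomial R)) : Prop :=
  G.FG ∧ Graded G

/-- The order of (the Rees algebra) `G` at the closed point of the local ring `(R, m)`: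
`ord(G) = inf { ν(f)/n : f W^n a homogeneous element of G, n ≥ 1, f ≠ 0 }`
(with value `∞` for the empty infimum). -/
def reesOrder {R : Type*} [CommRing R] (m : Ideal R) (G : Subalgebra R (Polynomial R)) : ℝ≥0∞ :=
  sInf {q : ℝ≥0∞ | ∃ (f : R) (n : ℕ), f ≠ 0 ∧ 1 ≤ n ∧ (C f * X ^ n : Polynomial R) ∈ G ∧
    q = (adicOrder m f : ℝ≥0∞) / (n : ℝ≥0∞)}

/-- `G = ⊕ I_l W^l` is *differentially closed* relative to a family `D` of derivations if
`I_{l+1} ⊆ I_l` and `D_j (I_l) ⊆ I_{l-1}` for all `l ≥ 1` and all `j`. -/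
def DiffClosed {k R ι : Type*} [CommRing k] [CommRing R] [Algebra k R]
    (D : ι → Derivation k R R) (G : Subalgebra R (Polynomial R)) : Prop :=
  (∀ (f : R) (l : ℕ), 1 ≤ l → (C f * X ^ (l + 1) : Polynomial R) ∈ G →
      (C f * X ^ l : Polynomial R) ∈ G) ∧
  (∀ (f : R) (l : ℕ) (j : ι), (C f * X ^ (l + 1) : Polynomial R) ∈ G →
      (C (D j f) * X ^ l : Polynomial R) ∈ G)

/-- `Diff(M)`: the smallest graded differentially closed subalgebra of `R[W]` containing the
set `M`. -/
def diffClosure {k R ι : Type*} [CommRing k] [CommRing R] [Algebra k R]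
    (D : ι → Derivation k R R) (M : Set (Polynomial R)) : Subalgebra R (Polynomial R) :=
  sInf {G : Subalgebra R (Polynomial R) | M ⊆ ↑G ∧ Graded G ∧ DiffClosed D G}

/-- The image `ψ(G)` of a Rees algebra `G` over `R` under a homomorphism (arc) `ψ : R → K⟦t⟧`:
the Rees algebra over `K⟦t⟧` generated by all `ψ(g) W^l` for `g W^l` a homogeneous element of
`G` with `ψ(g) ≠ 0`. -/
def arcImage {R A : Type*} [CommRing R] [CommRing A] (ψ : R → A)
    (G : Subalgebra R (Polynomial R)) : Subalgebra A (Polynomial A) :=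
  Algebra.adjoin A {p : Polynomial A | ∃ (g : R) (l : ℕ),
    (C g * X ^ l : Polynomial R) ∈ G ∧ ψ g ≠ 0 ∧ p = C (ψ g) * X ^ l}

/-- The order `ord(ψ)` of an arc `ψ : R → K⟦t⟧`: the largest `n` such that
`ψ(m) ⊆ t^n` (`t` being the ideal `tI`). -/
def homOrd {R A : Type*} [CommRing R] [CommRing A] (m : Ideal R) (tI : Ideal A)
    (ψ : R → A) : ℕ :=
  sSup {n : ℕ | ∀ s ∈ m, ψ s ∈ tI ^ n}

/-- The maximal ideal `(t)` of `K⟦t⟧`. -/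
def tId (K : Type*) [CommRing K] : Ideal (PowerSeries K) :=
  Ideal.span {(PowerSeries.X : PowerSeries K)}

/-- The `t`-adic order on `K⟦t⟧`. -/
def tOrd {K : Type*} [CommRing K] (g : PowerSeries K) : ℕ :=
  adicOrder (tId K) g

/-- The family of ideals `I_l` of the graded algebra `G = ⊕ I_l W^l`. -/
def idealFam {R : Type*} [CommRing R] (G : Subalgebra R (Polynomial R)) (l : ℕ) : Ideal R :=
  Submodule.comap (Polynomial.monomial l : R →ₗ[R] Polynomial R) (Subalgebra.toSubmodule G)

/-- The closed point of the local ring `(R, m)` belongs to the singular locus of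
`G = ⊕ I_l W^l`, i.e. `ν(I_l) ≥ l` for all `l ≥ 1`. -/
def SingFam {R : Type*} [CommRing R] (m : Ideal R) (I : ℕ → Ideal R) : Prop :=
  ∀ l : ℕ, 1 ≤ l → I l ≤ m ^ l

/-- The transform `⊕ (I_l · T^{-l}) W^l` of a Rees algebra `⊕ I_l W^l` over a DVR with
uniformizer `T` (when the closed point lies in the singular locus, `I_l ⊆ (T^l)` and
`I_l · T^{-l} = (I_l : (T^l))`). -/
def transformFam {R : Type*} [CommRing R] (T : R) (I : ℕ → Ideal R) : ℕ → Ideal R :=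
  fun l => (I l).colon (Ideal.span {T ^ l})

/-- The persistance: the least number `κ` of transforms needed so that the closed point no
longer lies in the singular locus. -/
def persist {R : Type*} [CommRing R] (m : Ideal R) (T : R)
    (G : Subalgebra R (Polynomial R)) : ℕ :=
  sInf {κ : ℕ | ¬ SingFam m ((transformFam T)^[κ] (idealFam G))}

/-- The set of elements of a ring integral over a subset `s` (monic equation with
coefficients in `s`). -/
def intClos {A : Type*} [CommRing A] (s : Set A) : Set A :=
  {p : A | ∃ q : Polynomial A, q.Monic ∧ (∀ n, q.coeff n ∈ s) ∧ Polynomial.eval p q = 0}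


/-- The monic polynomial `f = x^b + B_{b-2} x^{b-2} + ⋯ + B_1 x + B_0` with coefficients
`B_j = Bc j` (only `j ≤ b - 2` is relevant). -/
def minPolyOf {S : Type*} [CommRing S] (b : ℕ) (Bc : ℕ → S) : Polynomial S :=
  Polynomial.X ^ b + ∑ j ∈ Finset.range (b - 1), Polynomial.C (Bc j) * Polynomial.X ^ j


/-- The maximal ideal `(z_1, …, z_d)` of the polynomial ring `k[z_1, …, z_d]`
(the kernel of evaluation at the origin). -/
def mPoly (k : Type) [Field k] (d : ℕ) : Ideal (MvPolynomial (Fin d) k) :=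
  RingHom.ker (MvPolynomial.aeval (fun _ => (0 : k)) : MvPolynomial (Fin d) k →ₐ[k] k)

instance {k : Type} [Field k] {d : ℕ} : (mPoly k d).IsMaximal :=
  RingHom.ker_isMaximal_of_surjective _ (fun a => ⟨MvPolynomial.C a, by simp⟩)

instance {k : Type} [Field k] {d : ℕ} : (mPoly k d).IsPrime :=
  (inferInstance : (mPoly k d).IsMaximal).isPrime

/-- `IsSLoc k d S` says that `S` is (identified with) the localization of `k[z_1, …, z_d]`
at the maximal ideal `(z_1, …, z_d)`. -/
abbrev IsSLoc (k : Type) [Field k] (d : ℕ) (S : Type) [CommRing S]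
    [Algebra (MvPolynomial (Fin d) k) S] : Prop :=
  IsLocalization.AtPrime S (mPoly k d)

/-- The element `z_j` of `S`. -/
def zvar (k : Type) [Field k] (d : ℕ) (S : Type) [CommRing S]
    [Algebra (MvPolynomial (Fin d) k) S] (j : Fin d) : S :=
  algebraMap (MvPolynomial (Fin d) k) S (MvPolynomial.X j)

/-- The maximal ideal `m = (z_1, …, z_d)` of the local ring `S`. -/
def mS (k : Type) [Field k] (d : ℕ) (S : Type) [CommRing S]
    [Algebra (MvPolynomial (Fin d) k) S] : Ideal S :=
  (mPoly k d).map (algebraMap (MvPolynomial (Fin d) k) S)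


variable (k : Type) [Field k] (d : ℕ)
variable (S : Type) [CommRing S] [Algebra (MvPolynomial (Fin d) k) S] [Algebra k S]

/-- The elimination algebra `G_X^{(d)} = Diff(S[B_{b-2} W^2, …, B_0 W^b])` over `S` of the
hypersurface `X = V(f)`, where `f = x^b + B_{b-2} x^{b-2} + ⋯ + B_0`. -/
def hypElim (D : Fin d → Derivation k S S) (b : ℕ) (Bc : ℕ → S) :
    Subalgebra S (Polynomial S) :=
  diffClosure D {p : Polynomial S | ∃ i ≤ b - 2,
    p = Polynomial.C (Bc i) * Polynomial.X ^ (b - i)}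

/-- An arc in the hypersurface `X = V(f)` through the closed point `ξ`: a `k`-algebra
homomorphism `φ : S[x] → K⟦t⟧` with `φ(f) = 0` and `φ(x), φ(z_1), …, φ(z_d) ∈ (t)`,
with `φ(x)` and all `φ(z_j)` nonzero. -/
def IsHypArc (b : ℕ) (Bc : ℕ → S) {K : Type} [Field K] [Algebra k K]
    (φ : Polynomial S →ₐ[k] PowerSeries K) : Prop :=
  φ (minPolyOf b Bc) = 0 ∧
  φ Polynomial.X ∈ tId K ∧ (∀ j, φ (Polynomial.C (zvar k d S j)) ∈ tId K) ∧
  φ Polynomial.X ≠ 0 ∧ (∀ j, φ (Polynomial.C (zvar k d S j)) ≠ 0)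

/-- The order of the arc `φ`: `ord(φ) = min {α_0, α_1, …, α_d}`, where
`α_0 = ord_t φ(x)` and `α_j = ord_t φ(z_j)`. -/
def hypArcOrd {K : Type} [Field K] [Algebra k K]
    (φ : Polynomial S →ₐ[k] PowerSeries K) : ℕ :=
  sInf (insert (tOrd (φ Polynomial.X))
    (Set.range fun j => tOrd (φ (Polynomial.C (zvar k d S j)))))

/-- The contact algebra `G^{(1)}_{X_0,φ}`: the Rees algebra over `K⟦t⟧` generated by
`t^{α_0} W` together with all `φ(g) W^l`, for `g W^l` a homogeneous element of `G_X^{(d)}`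
with `φ(g) ≠ 0`. -/
def hypContact (D : Fin d → Derivation k S S) (b : ℕ) (Bc : ℕ → S)
    {K : Type} [Field K] [Algebra k K] (φ : Polynomial S →ₐ[k] PowerSeries K) :
    Subalgebra (PowerSeries K) (Polynomial (PowerSeries K)) :=
  Algebra.adjoin (PowerSeries K)
    (insert
      (Polynomial.C ((PowerSeries.X : PowerSeries K) ^ tOrd (φ Polynomial.X)) * Polynomial.X)
      {p : Polynomial (PowerSeries K) | ∃ (g : S) (l : ℕ),
        (Polynomial.C g * Polynomial.X ^ l : Polynomial S) ∈ hypElim k d S D b Bc ∧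
        φ (Polynomial.C g) ≠ 0 ∧
        p = Polynomial.C (φ (Polynomial.C g)) * Polynomial.X ^ l})


/-! The valuation `h ↦ ord_t h` makes `{∑ hₙ Wⁿ | ord_t hₙ ≥ n c}` a subalgebra of `K⟦t⟧[W]` for
every `c`, so `r_{X,φ} ≥ c` can be tested on the generators of the contact algebra. Take
`c = ord(G) · ord(φ)`. If `g Wˡ ∈ G`, then `g ∈ m ^ ν(g)` with `ν(g) ≥ l · ord(G)`, and
`φ(m) ⊆ (t ^ ord(φ))` gives `ord_t φ(g) ≥ l c`. In particular `ord_t φ(B_j) ≥ (b - j) c`, so the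
integral equation `φ(x)ᵇ + ∑ φ(B_j) φ(x)ʲ = 0` forces `ord_t φ(x) ≥ c`, which settles the
remaining generator `t ^ α₀ W`. -/

open scoped PowerSeries

section OrderIdeal

/-- The ideal of power series of `t`-adic order at least `c`. The bound `c` is allowed to be an
arbitrary extended nonnegative real, because orders of Rees algebras are infima of fractions. -/
def orderIdeal (K : Type*) [CommRing K] (c : ℝ≥0∞) : Ideal K⟦X⟧ where
  carrier := {h | c ≤ (h.order : ℝ≥0∞)}
  add_mem' {g h} hg hh := by
    refine (le_min (Set.mem_ofPred.1 hg) (Set.mem_ofPred.1 hh)).trans ?_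
    rw [← ENat.toENNReal_min, ENat.toENNReal_le]
    exact PowerSeries.min_order_le_order_add g h
  zero_mem' := by simp
  smul_mem' a h hh :=
    hh.trans <| ENat.toENNReal_le.2 <| le_add_self.trans <| PowerSeries.le_order_mul a h

variable {K : Type*} [CommRing K]

theorem mem_orderIdeal_iff {c : ℝ≥0∞} {h : K⟦X⟧} :
    h ∈ orderIdeal K c ↔ c ≤ (h.order : ℝ≥0∞) :=
  Iff.rfl

theorem orderIdeal_zero : orderIdeal K 0 = ⊤ :=
  top_unique fun _ _ => mem_orderIdeal_iff.2 zero_le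

theorem orderIdeal_antitone : Antitone (orderIdeal K) :=
  fun _ _ hcd _ hh => hcd.trans hh

theorem mul_mem_orderIdeal_add {c d : ℝ≥0∞} {g h : K⟦X⟧} (hg : g ∈ orderIdeal K c)
    (hh : h ∈ orderIdeal K d) : g * h ∈ orderIdeal K (c + d) := by
  rw [mem_orderIdeal_iff] at hg hh ⊢
  refine (add_le_add hg hh).trans ?_
  rw [← ENat.toENNReal_add, ENat.toENNReal_le]
  exact PowerSeries.le_order_mul g h

theorem pow_mem_orderIdeal_mul {c : ℝ≥0∞} {h : K⟦X⟧} (hh : h ∈ orderIdeal K c) (n : ℕ) :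
    h ^ n ∈ orderIdeal K (n * c) := by
  induction n with
  | zero => simp [orderIdeal_zero]
  | succ n ih =>
    rw [pow_succ, Nat.cast_succ, add_one_mul]
    exact mul_mem_orderIdeal_add ih hh

theorem tId_pow_eq_orderIdeal (n : ℕ) : tId K ^ n = orderIdeal K n := by
  ext h
  rw [tId, Ideal.span_singleton_pow, Ideal.mem_span_singleton, mem_orderIdeal_iff,
    ← ENat.toENNReal_coe, ENat.toENNReal_le, PowerSeries.order_eq_emultiplicity_X,
    pow_dvd_iff_le_emultiplicity]

theorem coe_tOrd {h : K⟦X⟧} (h0 : h ≠ 0) : (tOrd h : ℝ≥0∞) = (h.order : ℝ≥0∞) := by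
  have hset : {n : ℕ | h ∈ tId K ^ n} = Set.Iic h.order.toNat := by
    ext n
    rw [Set.mem_ofPred_eq, tId_pow_eq_orderIdeal, mem_orderIdeal_iff,
      ← PowerSeries.coe_toNat_order h0]
    simp
  rw [tOrd, adicOrder, hset, csSup_Iic, ← PowerSeries.coe_toNat_order h0, ENat.toNat_natCast,
    ENat.toENNReal_coe]

theorem mem_orderIdeal_tOrd (h : K⟦X⟧) : h ∈ orderIdeal K (tOrd h) := by
  rcases eq_or_ne h 0 with rfl | h0
  · exact zero_mem _
  · exact (coe_tOrd h0).le

theorem tOrd_ne_zero {h : K⟦X⟧} (hh : h ∈ tId K) (h0 : h ≠ 0) : tOrd h ≠ 0 := by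
  rw [← pow_one (tId K), tId_pow_eq_orderIdeal, mem_orderIdeal_iff, ← coe_tOrd h0] at hh
  exact Nat.one_le_iff_ne_zero.1 (by exact_mod_cast hh)

theorem order_pow_eq_mul_tOrd [IsDomain K] {h : K⟦X⟧} (h0 : h ≠ 0) (n : ℕ) :
    ((h ^ n).order : ℝ≥0∞) = n * tOrd h := by
  rw [coe_tOrd h0, PowerSeries.order_pow, nsmul_eq_mul, ENat.toENNReal_mul, ENat.toENNReal_coe]

theorem mem_orderIdeal_of_pow_add_sum_eq_zero [IsDomain K] {b : ℕ} {s : Finset ℕ}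
    {a : ℕ → K⟦X⟧} {y : K⟦X⟧} {c : ℝ≥0∞} (hs : ∀ j ∈ s, j < b)
    (ha : ∀ j ∈ s, a j ∈ orderIdeal K ((b - j : ℕ) * c))
    (hy : y ^ b + ∑ j ∈ s, a j * y ^ j = 0) : y ∈ orderIdeal K c := by
  rcases eq_or_ne y 0 with rfl | hy0
  · exact zero_mem _
  rcases le_total c (tOrd y) with hc | hc
  · exact orderIdeal_antitone hc (mem_orderIdeal_tOrd y)
  rcases b with _ | n
  · have hs' : s = ∅ := Finset.eq_empty_of_forall_notMem fun j hj => (hs j hj).not_ge j.zero_le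
    simp [hs'] at hy
  -- As `tOrd y ≤ c` and `j < b`, the bound `(b - j) c + j · tOrd y` is smallest for `j = b - 1`.
  have hterm : ∀ j ∈ s, a j * y ^ j ∈ orderIdeal K (c + n * tOrd y) := fun j hj => by
    obtain ⟨e, rfl⟩ := Nat.exists_eq_add_of_le (Nat.le_of_lt_succ (hs j hj))
    have hprod := mul_mem_orderIdeal_add (ha j hj)
      (pow_mem_orderIdeal_mul (mem_orderIdeal_tOrd y) j)
    refine orderIdeal_antitone ?_ hprod
    calc c + (j + e : ℕ) * tOrd y = c + e * tOrd y + j * tOrd y := by push_cast; ring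
      _ ≤ c + e * c + j * tOrd y := by gcongr
      _ = (j + e + 1 - j : ℕ) * c + j * tOrd y := by
        rw [show j + e + 1 - j = e + 1 by omega]; push_cast; ring
  have hpow : y ^ (n + 1) ∈ orderIdeal K (c + n * tOrd y) := by
    rw [eq_neg_of_add_eq_zero_left hy]
    exact neg_mem (sum_mem hterm)
  rw [mem_orderIdeal_iff, order_pow_eq_mul_tOrd hy0, Nat.cast_succ, add_one_mul, add_comm,
    ENNReal.add_le_add_iff_left (by finiteness)] at hpow
  exact orderIdeal_antitone hpow (mem_orderIdeal_tOrd y)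

end OrderIdeal

section ReesOrder

variable {R : Type*} [CommRing R] {m : Ideal R} {G : Subalgebra R R[X]} {c : ℝ≥0∞}

theorem mem_pow_adicOrder (m : Ideal R) (f : R) : f ∈ m ^ adicOrder m f := by
  by_cases hbdd : BddAbove {n : ℕ | f ∈ m ^ n}
  · exact Nat.sSup_mem ⟨0, by simp⟩ hbdd
  · simp [adicOrder, Nat.sSup_of_not_bddAbove hbdd]

theorem le_reesOrder_iff :
    c ≤ reesOrder m G ↔
      ∀ (f : R) (n : ℕ), f ≠ 0 → C f * X ^ n ∈ G → n * c ≤ adicOrder m f := by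
  have hdiv : ∀ (f : R) (n : ℕ), 1 ≤ n →
      (c ≤ (adicOrder m f : ℝ≥0∞) / n ↔ n * c ≤ adicOrder m f) := fun f n hn => by
    rw [ENNReal.le_div_iff_mul_le (by left; positivity) (by simp), mul_comm]
  constructor
  · intro hc f n hf hfG
    rcases n.eq_zero_or_pos with rfl | hn
    · simp
    · exact (hdiv f n hn).1 (hc.trans (sInf_le ⟨f, n, hf, hn, hfG, rfl⟩))
  · intro hc
    refine le_sInf ?_
    rintro _ ⟨f, n, hf, hn, hfG, rfl⟩
    exact (hdiv f n hn).2 (hc f n hf hfG)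

variable {K : Type*} [CommRing K]

theorem map_mem_orderIdeal_of_mem_pow {ψ : R →+* K⟦X⟧} {N n : ℕ} {g : R}
    (hm : m.map ψ ≤ tId K ^ N) (hg : g ∈ m ^ n) : ψ g ∈ orderIdeal K (n * N) := by
  rw [← Nat.cast_mul, ← tId_pow_eq_orderIdeal, mul_comm, pow_mul]
  refine Ideal.pow_right_mono hm n ?_
  rw [← Ideal.map_pow]
  exact Ideal.mem_map_of_mem ψ hg

theorem map_mem_orderIdeal_of_C_mul_X_pow_mem {ψ : R →+* K⟦X⟧} {N l : ℕ} {g : R}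
    (hm : m.map ψ ≤ tId K ^ N) (hg : C g * X ^ l ∈ G) :
    ψ g ∈ orderIdeal K (l * (reesOrder m G * N)) := by
  rcases eq_or_ne g 0 with rfl | hg0
  · simp
  have hord : l * reesOrder m G ≤ adicOrder m g := le_reesOrder_iff.1 le_rfl g l hg0 hg
  refine orderIdeal_antitone ?_ (map_mem_orderIdeal_of_mem_pow hm (mem_pow_adicOrder m g))
  rw [← mul_assoc]
  gcongr

end ReesOrder

section OrderAlgebra

/-- The algebra `⊕ {h ∈ K⟦t⟧ | ord_t h ≥ n c} Wⁿ`, the largest graded subalgebra of `K⟦t⟧[W]`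
whose order at the closed point is at least `c`. -/
def orderAlgebra (K : Type*) [CommRing K] (c : ℝ≥0∞) : Subalgebra K⟦X⟧ K⟦X⟧[X] where
  carrier := {p | ∀ n : ℕ, p.coeff n ∈ orderIdeal K (n * c)}
  add_mem' hp hq n := by
    rw [coeff_add]
    exact add_mem (hp n) (hq n)
  mul_mem' hp hq n := by
    rw [coeff_mul]
    refine sum_mem fun i hi => ?_
    rw [← Finset.HasAntidiagonal.mem_antidiagonal.1 hi, Nat.cast_add, add_mul]
    exact mul_mem_orderIdeal_add (hp i.1) (hq i.2)
  algebraMap_mem' a n := by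
    rcases eq_or_ne n 0 with rfl | hn
    · simp [orderIdeal_zero]
    · simp [coeff_C, hn]

variable {K : Type*} [CommRing K] {c : ℝ≥0∞}

theorem C_mul_X_pow_mem_orderAlgebra_iff {h : K⟦X⟧} {l : ℕ} :
    C h * X ^ l ∈ orderAlgebra K c ↔ h ∈ orderIdeal K (l * c) := by
  refine ⟨fun hmem => by simpa using hmem l, fun hh n => ?_⟩
  rw [coeff_C_mul_X_pow]
  split_ifs with hn
  · exact hn ▸ hh
  · exact zero_mem _

theorem le_reesOrder_of_le_orderAlgebra {G : Subalgebra K⟦X⟧ K⟦X⟧[X]}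
    (hG : G ≤ orderAlgebra K c) : c ≤ reesOrder (tId K) G :=
  le_reesOrder_iff.2 fun _ _ h0 hh =>
    (C_mul_X_pow_mem_orderAlgebra_iff.1 (hG hh)).trans_eq (coe_tOrd h0).symm

end OrderAlgebra

section Contact

variable {R K : Type*} [CommRing R] [CommRing K]

/-- The contact algebra of a homomorphism `φ : R[x] → K⟦t⟧` along a subalgebra `G` of `R[W]`,
generated by `t ^ ord_t φ(x) W` and the `φ(g) Wˡ ≠ 0` with `g Wˡ ∈ G`. The algebra
`G^{(1)}_{X_0,φ}` is the case where `G` is the elimination algebra. -/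
def contactAlgebra (φ : R[X] →+* K⟦X⟧) (G : Subalgebra R R[X]) : Subalgebra K⟦X⟧ K⟦X⟧[X] :=
  Algebra.adjoin K⟦X⟧
    (insert (C ((PowerSeries.X : K⟦X⟧) ^ tOrd (φ X)) * X)
      {p | ∃ (g : R) (l : ℕ), C g * X ^ l ∈ G ∧ φ (C g) ≠ 0 ∧ p = C (φ (C g)) * X ^ l})

theorem contactAlgebra_le_orderAlgebra {φ : R[X] →+* K⟦X⟧} {G : Subalgebra R R[X]} {c : ℝ≥0∞}
    (hx : c ≤ tOrd (φ X)) (hG : ∀ (g : R) (l : ℕ), C g * X ^ l ∈ G →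
      φ (C g) ∈ orderIdeal K (l * c)) :
    contactAlgebra φ G ≤ orderAlgebra K c := by
  refine Algebra.adjoin_le ?_
  rintro _ (rfl | ⟨g, l, hg, -, rfl⟩)
  · have hX : (PowerSeries.X : K⟦X⟧) ^ tOrd (φ X) ∈ orderIdeal K (tOrd (φ X)) := by
      rw [← tId_pow_eq_orderIdeal]
      exact Ideal.pow_mem_pow (Ideal.mem_span_singleton_self _) _
    rw [← pow_one (X : K⟦X⟧[X])]
    exact C_mul_X_pow_mem_orderAlgebra_iff.2 (orderIdeal_antitone (by simpa using hx) hX)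
  · exact C_mul_X_pow_mem_orderAlgebra_iff.2 (hG g l hg)

theorem hypersurface_normalized_contact_order_ge_elimination_order_general [IsDomain K]
    {m : Ideal R} {G : Subalgebra R R[X]} {b : ℕ} {B : ℕ → R}
    (hB : ∀ j < b - 1, C (B j) * X ^ (b - j) ∈ G)
    {φ : R[X] →+* K⟦X⟧} (hf : φ (minPolyOf b B) = 0) (hx : φ X ≠ 0)
    {N : ℕ} (hN : N ≠ 0) (hm : m.map (φ.comp C) ≤ tId K ^ N) :
    reesOrder m G ≤ reesOrder (tId K) (contactAlgebra φ G) / N := by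
  rw [ENNReal.le_div_iff_mul_le (by simp [hN]) (by simp)]
  have hφG : ∀ (g : R) (l : ℕ), C g * X ^ l ∈ G →
      φ (C g) ∈ orderIdeal K (l * (reesOrder m G * N)) :=
    fun _ _ hg => map_mem_orderIdeal_of_C_mul_X_pow_mem hm hg
  have hφf : φ X ^ b + ∑ j ∈ Finset.range (b - 1), φ (C (B j)) * φ X ^ j = 0 := by
    simpa [minPolyOf] using hf
  have hφX : φ X ∈ orderIdeal K (reesOrder m G * N) :=
    mem_orderIdeal_of_pow_add_sum_eq_zero
      (fun j hj => (Finset.mem_range.1 hj).trans_le (b.sub_le 1))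
      (fun j hj => hφG _ _ (hB j (Finset.mem_range.1 hj))) hφf
  rw [mem_orderIdeal_iff, ← coe_tOrd hx] at hφX
  exact le_reesOrder_of_le_orderAlgebra (contactAlgebra_le_orderAlgebra hφX hφG)

end Contact

theorem subset_diffClosure {k R ι : Type*} [CommRing k] [CommRing R] [Algebra k R]
    (D : ι → Derivation k R R) (M : Set R[X]) : M ⊆ diffClosure D M :=
  fun _ hp => Algebra.mem_sInf.2 fun _ hG => hG.1 hp

section HypersurfaceArc

theorem mPoly_eq_idealOfVars (k : Type) [Field k] (d : ℕ) :
    mPoly k d = MvPolynomial.idealOfVars (Fin d) k := by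
  ext p
  rw [← pow_one (MvPolynomial.idealOfVars _ _), MvPolynomial.mem_pow_idealOfVars_iff', mPoly,
    RingHom.mem_ker, MvPolynomial.aeval_zero']
  simp [MvPolynomial.constantCoeff_eq, Finsupp.degree_eq_zero_iff]

variable {k : Type} [Field k] {d : ℕ} {S : Type} [CommRing S] [Algebra (MvPolynomial (Fin d) k) S]

theorem map_mS_le_iff {A : Type*} [CommRing A] {ψ : S →+* A} {I : Ideal A} :
    (mS k d S).map ψ ≤ I ↔ ∀ j, ψ (zvar k d S j) ∈ I := by
  rw [mS, mPoly_eq_idealOfVars, Ideal.map_map, Ideal.map_span, Ideal.span_le]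
  simp [Set.subset_def, zvar]

variable [Algebra k S] {b : ℕ} {Bc : ℕ → S} {K : Type} [Field K] [Algebra k K]
  {φ : S[X] →ₐ[k] K⟦X⟧}

theorem IsHypArc.hypArcOrd_ne_zero (hφ : IsHypArc k d S b Bc φ) : hypArcOrd k d S φ ≠ 0 := by
  obtain ⟨-, hx, hz, hx0, hz0⟩ := hφ
  have hmin : hypArcOrd k d S φ ∈ _ := Nat.sInf_mem (Set.insert_nonempty _ _)
  rcases hmin with hmin | ⟨j, hmin⟩
  · exact hmin ▸ tOrd_ne_zero hx hx0
  · exact hmin ▸ tOrd_ne_zero (hz j) (hz0 j)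

theorem map_mS_le_tId_pow_hypArcOrd (φ : S[X] →ₐ[k] K⟦X⟧) :
    (mS k d S).map ((φ : S[X] →+* K⟦X⟧).comp C) ≤ tId K ^ hypArcOrd k d S φ := by
  refine map_mS_le_iff.2 fun j => ?_
  have hj : hypArcOrd k d S φ ≤ tOrd (φ (C (zvar k d S j))) := Nat.sInf_le (.inr ⟨j, rfl⟩)
  rw [tId_pow_eq_orderIdeal]
  exact orderIdeal_antitone (by exact_mod_cast hj) (mem_orderIdeal_tOrd _)

end HypersurfaceArc

/-- (Theorem `thm:desigualdad`, hypersurface case.)  In the hypersurface setting, for every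
field extension `K ⊇ k` and every arc `φ : S[x] → K⟦t⟧` in `X = V(f)` through the closed
point `ξ`, one has `r_{X,φ} / ord(φ) ≥ ord(G_X^{(d)})`. -/
theorem hypersurface_normalized_contact_order_ge_elimination_order
    (k : Type) [Field k] [CharZero k] (d : ℕ) (hd : 1 ≤ d)
    (S : Type) [CommRing S] [IsDomain S] [Algebra (MvPolynomial (Fin d) k) S]
    [Algebra k S] [IsScalarTower k (MvPolynomial (Fin d) k) S] [IsSLoc k d S]
    (D : Fin d → Derivation k S S)
    (hD : ∀ i j : Fin d, D j (zvar k d S i) = if i = j then 1 else 0)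
    (b : ℕ) (hb : 2 ≤ b) (Bc : ℕ → S)
    (hmem : ∀ i ≤ b - 2, Bc i ∈ (mS k d S) ^ (b - i))
    (hnz : ∃ i ≤ b - 2, Bc i ≠ 0)
    (hirr : Irreducible (minPolyOf b Bc))
    (K : Type) [Field K] [Algebra k K]
    (φ : Polynomial S →ₐ[k] PowerSeries K) (hφ : IsHypArc k d S b Bc φ) :
    reesOrder (mS k d S) (hypElim k d S D b Bc) ≤
      reesOrder (tId K) (hypContact k d S D b Bc φ) / (hypArcOrd k d S φ : ℝ≥0∞) := by
  have hB : ∀ j < b - 1, C (Bc j) * X ^ (b - j) ∈ hypElim k d S D b Bc := fun j hj =>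
    subset_diffClosure D _ ⟨j, by omega, rfl⟩
  exact hypersurface_normalized_contact_order_ge_elimination_order_general hB hφ.1 hφ.2.2.2.1
    hφ.hypArcOrd_ne_zero (map_mS_le_tId_pow_hypArcOrd φ)

end NashMult
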